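/- Let $S$ be real-analytic near the origin in $\mathbf{R}^n$, not identically zero, with $S(0)=0$, $\nabla S(0)=0$, and let $g=\min(a_0, l_1-\alpha_1,\dots,l_m-\alpha_m)$. If $s_0<0$ and $s_0>\max(-g,\,-1/\max(o(S),2))$, then for sufficiently small $r_0>0$ the integral $\int_{(-r_0,r_0)^n}\big(\min(|t_1|,\dots,|t_n|,\,S^*(\mathbf{t}))\big)^{s_0}\,\prod_{k=1}^m|\mathbf{t}_k|^{-\alpha_k}\,d\mathbf{t}$ is finite. -/

import Mathlib

open MeasureTheory Real Filter Topology Set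
open scoped ENNReal

noncomputable section

namespace Paper

variable {n m : ℕ}

/-- The monomial `t ^ α`. -/
def monomial (α : Fin n → ℕ) (t : Fin n → ℝ) : ℝ := ∏ i, t i ^ α i

/-- `S` is real-analytic near the origin with Taylor coefficient family `c`:
its Taylor series at the origin converges to it near `0`. -/
def HasTaylorSeriesAtOrigin (S : (Fin n → ℝ) → ℝ) (c : (Fin n → ℕ) → ℝ) : Prop :=
  ∀ᶠ t in 𝓝 (0 : Fin n → ℝ), HasSum (fun α => c α * monomial α t) (S t)

/-- The Newton polyhedron of the Taylor coefficient family `c`: the convex hull of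
the octants above the exponents of the nonzero coefficients. -/
def newtonPolyhedron (c : (Fin n → ℕ) → ℝ) : Set (Fin n → ℝ) :=
  convexHull ℝ {x : Fin n → ℝ | ∃ α : Fin n → ℕ, c α ≠ 0 ∧ ∀ i, (α i : ℝ) ≤ x i}

/-- The vertices (extreme points) of the Newton polyhedron. -/
def newtonVertices (c : (Fin n → ℕ) → ℝ) : Set (Fin n → ℝ) :=
  Set.extremePoints ℝ (newtonPolyhedron c)

/-- `f^*`, the sum of the absolute values of the vertex monomials. -/
def starFn (c : (Fin n → ℕ) → ℝ) (t : Fin n → ℝ) : ℝ :=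
  ∑' v : newtonVertices c, ∏ i, |t i| ^ ((v : Fin n → ℝ) i)

/-- Compact (exposed) faces of the Newton polyhedron; a vertex is a face of dimension zero. -/
def IsCompactFace (c : (Fin n → ℕ) → ℝ) (F : Set (Fin n → ℝ)) : Prop :=
  IsExposed ℝ (newtonPolyhedron c) F ∧ F.Nonempty ∧ IsCompact F

/-- The face polynomial `f_F(t) = ∑_{α ∈ F} f_α t^α`. -/
def facePoly (c : (Fin n → ℕ) → ℝ) (F : Set (Fin n → ℝ)) (t : Fin n → ℝ) : ℝ :=
  ∑' α : {α : Fin n → ℕ // (fun i => (α i : ℝ)) ∈ F}, c α.1 * monomial α.1 t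

/-- The order of vanishing of `g` at `x`. -/
def vanishingOrder (g : (Fin n → ℝ) → ℝ) (x : Fin n → ℝ) : ℕ∞ :=
  sSup {k : ℕ∞ | ∀ j : ℕ, (j : ℕ∞) < k → iteratedFDeriv ℝ j g x = 0}

/-- `o(f)`: the maximum order of a zero of a compact face polynomial on `(ℝ ∖ {0})^n`
(`0` if there are no such zeroes). -/
def newtonOrder (c : (Fin n → ℕ) → ℝ) : ℕ∞ :=
  sSup {k : ℕ∞ | ∃ F : Set (Fin n → ℝ), IsCompactFace c F ∧
    ∃ x : Fin n → ℝ, (∀ i, x i ≠ 0) ∧ facePoly c F x = 0 ∧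
      k ≤ vanishingOrder (facePoly c F) x}

/-- The Euclidean norm `|t_k|` of the `k`-th group of variables. -/
def grpNorm (grp : Fin n → Fin m) (k : Fin m) (t : Fin n → ℝ) : ℝ :=
  Real.sqrt (∑ i ∈ Finset.univ.filter (fun i => grp i = k), t i ^ 2)

/-- The weight `∏_k |t_k|^{-α_k}`. -/
def kernelWeight (grp : Fin n → Fin m) (a : Fin m → ℝ) (t : Fin n → ℝ) : ℝ :=
  ∏ k, grpNorm grp k t ^ (-(a k))

/-- The measure `dμ = ∏_k |t_k|^{-α_k} dm`, `m` being Lebesgue measure. -/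
def fracMeasure (grp : Fin n → Fin m) (a : Fin m → ℝ) : Measure (Fin n → ℝ) :=
  volume.withDensity fun t => ENNReal.ofReal (kernelWeight grp a t)

/-- The characterization (1.5) of the sublevel growth exponents `a₀`, `d₀`. -/
def IsSublevelExponent (grp : Fin n → Fin m) (a : Fin m → ℝ) (c : (Fin n → ℕ) → ℝ)
    (a₀ : ℝ) (d₀ : ℕ) : Prop :=
  0 < a₀ ∧ d₀ ≤ n - 1 ∧ ∃ r₀ > (0 : ℝ), ∀ r : ℝ, 0 < r → r < r₀ →
    ∃ b B : ℝ, 0 < b ∧ 0 < B ∧ ∀ ε : ℝ, 0 < ε → ε < 1/2 →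
      ENNReal.ofReal (b * ε ^ a₀ * |Real.log ε| ^ d₀) <
          fracMeasure grp a {t | (∀ i, t i ∈ Set.Ioo 0 r) ∧ starFn c t < ε} ∧
        fracMeasure grp a {t | (∀ i, t i ∈ Set.Ioo 0 r) ∧ starFn c t < ε} <
          ENNReal.ofReal (B * ε ^ a₀ * |Real.log ε| ^ d₀)

/-- The kernel bounds (1.2a)-(1.2b): `K` is `C¹` off the coordinate hyperplanes,
`|K(t)| ≤ C ∏_k |t_k|^{-α_k}` and `|∂_{t_i} K(t)| ≤ C |t_i|⁻¹ ∏_k |t_k|^{-α_k}`. -/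
def KernelBounds (grp : Fin n → Fin m) (a : Fin m → ℝ) (K : (Fin n → ℝ) → ℝ) : Prop :=
  ContDiffOn ℝ 1 K {t | ∀ i, t i ≠ 0} ∧
  ∃ C : ℝ, ∀ t : Fin n → ℝ, (∀ i, t i ≠ 0) →
    |K t| ≤ C * kernelWeight grp a t ∧
    ∀ i : Fin n, |fderiv ℝ K t (Pi.single i 1)| ≤ C / |t i| * kernelWeight grp a t

/-- The averaging operator (1.1),
`Tf(x, x_{n+1}) = ∫ f(x - t, x_{n+1} - S(t)) K(t) dt`. -/
def radonOp (S K : (Fin n → ℝ) → ℝ) (f : (Fin (n+1) → ℝ) → ℂ) :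
    (Fin (n+1) → ℝ) → ℂ :=
  fun x => ∫ t : Fin n → ℝ, (K t : ℂ) * f (fun j => x j - Fin.snoc (α := fun _ => ℝ) t (S t) j)

/-- The Fourier transform on `ℝ^N`. -/
def fourierTransform {N : ℕ} (g : (Fin N → ℝ) → ℂ) (ξ : Fin N → ℝ) : ℂ :=
  ∫ x : Fin N → ℝ,
    Complex.exp (-2 * (Real.pi : ℂ) * Complex.I * ((∑ i, x i * ξ i : ℝ) : ℂ)) * g x

/-- The inverse Fourier transform on `ℝ^N`. -/
def fourierInv {N : ℕ} (g : (Fin N → ℝ) → ℂ) (x : Fin N → ℝ) : ℂ :=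
  ∫ ξ : Fin N → ℝ,
    Complex.exp (2 * (Real.pi : ℂ) * Complex.I * ((∑ i, x i * ξ i : ℝ) : ℂ)) * g ξ

/-- The Bessel potential `(I - Δ)^{β/2} g`, defined via the Fourier transform. -/
def besselPotential {N : ℕ} (β : ℝ) (g : (Fin N → ℝ) → ℂ) : (Fin N → ℝ) → ℂ :=
  fun x => fourierInv
    (fun ξ => (((1 + ∑ i, ξ i ^ 2) ^ (β / 2) : ℝ) : ℂ) * fourierTransform g ξ) x

/-- `T` is bounded from `L^p(ℝ^N)` to the `L^p` Sobolev space `L^p_β(ℝ^N)`,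
whose norm is `‖(I - Δ)^{β/2} f‖_{L^p}`. -/
def BddLpSobolev {N : ℕ} (p β : ℝ)
    (T : ((Fin N → ℝ) → ℂ) → ((Fin N → ℝ) → ℂ)) : Prop :=
  ∃ C : ℝ, 0 ≤ C ∧ ∀ f : SchwartzMap (Fin N → ℝ) ℂ,
    eLpNorm (besselPotential β (T ⇑f)) (ENNReal.ofReal p) volume ≤
      ENNReal.ofReal C * eLpNorm (⇑f) (ENNReal.ofReal p) volume

/-- `min(|t₁|,...,|tₙ|, S^*(t))`. -/
def minFactor (c : (Fin n → ℕ) → ℝ) (t : Fin n → ℝ) : ℝ :=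
  min (⨅ i, |t i|) (starFn c t)

/-- The analytic family (3.1):
`T_z f(x) = e^{z²} ∫ (min(|t₁|,...,|tₙ|,S^*(t)))^z f(x - t, x_{n+1} - S(t)) K(t) dt`. -/
def radonOpZ (S K : (Fin n → ℝ) → ℝ) (c : (Fin n → ℕ) → ℝ) (z : ℂ)
    (f : (Fin (n+1) → ℝ) → ℂ) : (Fin (n+1) → ℝ) → ℂ :=
  fun x => Complex.exp (z ^ 2) *
    ∫ t : Fin n → ℝ,
      ((minFactor c t : ℂ) ^ z) * (K t : ℂ) * f (fun j => x j - Fin.snoc (α := fun _ => ℝ) t (S t) j)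

/-- The Fourier transform (3.8) of the convolution kernel `ν_z` of `T_z`. -/
def nuHatZ (S K : (Fin n → ℝ) → ℝ) (c : (Fin n → ℕ) → ℝ) (z : ℂ)
    (lam : Fin (n+1) → ℝ) : ℂ :=
  Complex.exp (z ^ 2) *
    ∫ t : Fin n → ℝ,
      Complex.exp (Complex.I *
          (((∑ i, lam i.castSucc * t i) + lam (Fin.last n) * S t : ℝ) : ℂ)) *
        ((minFactor c t : ℂ) ^ z) * (K t : ℂ)


lemma starFn_nonneg' (c : (Fin n → ℕ) → ℝ) (t : Fin n → ℝ) : 0 ≤ starFn c t :=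
  tsum_nonneg fun _ => Finset.prod_nonneg fun _ _ => Real.rpow_nonneg (abs_nonneg _) _

lemma grpNorm_nonneg' (grp : Fin n → Fin m) (k : Fin m) (t : Fin n → ℝ) :
    0 ≤ grpNorm grp k t := Real.sqrt_nonneg _

lemma kernelWeight_nonneg' (grp : Fin n → Fin m) (a : Fin m → ℝ) (t : Fin n → ℝ) :
    0 ≤ kernelWeight grp a t :=
  Finset.prod_nonneg fun _ _ => Real.rpow_nonneg (grpNorm_nonneg' _ _ _) _

lemma kernelWeight_measurable' (grp : Fin n → Fin m) (a : Fin m → ℝ) :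
    Measurable (kernelWeight grp a) := by
  unfold kernelWeight grpNorm
  fun_prop

lemma le_grpNorm' (grp : Fin n → Fin m) (t : Fin n → ℝ) (j : Fin n) :
    t j ≤ grpNorm grp (grp j) t := by
  unfold grpNorm
  apply Real.le_sqrt_of_sq_le
  exact Finset.single_le_sum (f := fun i => t i ^ 2) (fun i _ => sq_nonneg _) (by simp)

/-- the positive cube -/
def posCube (n : ℕ) (r : ℝ) : Set (Fin n → ℝ) := Set.univ.pi fun _ => Set.Ioo 0 r

lemma weight_le' (grp : Fin n → Fin m) (a : Fin m → ℝ) (β : Fin n → ℝ)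
    (hβ : ∀ j, 0 ≤ β j)
    (hsum : ∀ k, ∑ j ∈ Finset.univ.filter (fun i => grp i = k), β j = a k)
    (hgrp : Function.Surjective grp)
    (t : Fin n → ℝ) (ht : ∀ i, 0 < t i) :
    kernelWeight grp a t ≤ ∏ j, t j ^ (-(β j)) := by
  unfold kernelWeight
  rw [← Finset.prod_fiberwise (s := Finset.univ) (g := grp)]
  refine Finset.prod_le_prod (fun k _ => Real.rpow_nonneg (grpNorm_nonneg' _ _ _) _) ?_
  intro k _
  obtain ⟨j₀, rfl⟩ := hgrp k
  have hpos : 0 < grpNorm grp (grp j₀) t := lt_of_lt_of_le (ht j₀) (le_grpNorm' grp t j₀)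
  rw [← hsum, ← Finset.sum_neg_distrib, Real.rpow_sum_of_pos hpos]
  refine Finset.prod_le_prod (fun j _ => Real.rpow_nonneg hpos.le _) ?_
  intro j hj
  have hj' : grp j = grp j₀ := by simpa using hj
  rw [← hj']
  exact Real.rpow_le_rpow_of_nonpos (ht j) (le_grpNorm' grp t j) (by simpa using hβ j)

lemma prod_integral' (γ : Fin n → ℝ) (hγ : ∀ j, -1 < γ j) (r : ℝ) (hr : 0 < r) :
    ∫⁻ t in posCube n r, ENNReal.ofReal (∏ j, t j ^ γ j) < ⊤ := by
  have h1 : Integrable (fun t : Fin n → ℝ => ∏ j, t j ^ γ j)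
      (Measure.pi fun _ : Fin n => (volume : Measure ℝ).restrict (Set.Ioo 0 r)) := by
    refine Integrable.fintype_prod (f := fun j (x : ℝ) => x ^ γ j) ?_
    intro j
    exact (intervalIntegral.integrableOn_Ioo_rpow_iff hr).2 (hγ j)
  rw [← Measure.restrict_pi_pi] at h1
  exact h1.lintegral_lt_top

lemma part_one' (grp : Fin n → Fin m) (hgrp : Function.Surjective grp) (a : Fin m → ℝ)
    (ha : ∀ k, 0 ≤ a k ∧ a k < ((Finset.univ.filter (fun i => grp i = k)).card : ℝ))
    (s : ℝ) (hs : -1 < s) (hs0 : s < 0)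
    (has : ∀ k, a k < ((Finset.univ.filter (fun i => grp i = k)).card : ℝ) + s)
    (i : Fin n) (r : ℝ) (hr : 0 < r) :
    ∫⁻ t in posCube n r, ENNReal.ofReal (t i ^ s * kernelWeight grp a t) < ⊤ := by
  set v : Fin n → ℝ := fun j => if j = i then s else 0 with hv
  set U : Fin m → ℝ := fun k => ∑ j ∈ Finset.univ.filter (fun i => grp i = k), (1 + v j) with hU
  have hvpos : ∀ j, 0 < 1 + v j := by
    intro j; simp only [hv]; split_ifs <;> linarith
  have hUa : ∀ k, a k < U k := by
    intro k
    have : U k = ((Finset.univ.filter (fun i => grp i = k)).card : ℝ)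
        + if grp i = k then s else 0 := by
      simp [hU, hv, Finset.sum_add_distrib, Finset.sum_ite_eq']
    rw [this]
    split_ifs
    · exact has k
    · simpa using (ha k).2
  have hUpos : ∀ k, 0 < U k := fun k => (ha k).1.trans_lt (hUa k)
  set β : Fin n → ℝ := fun j => a (grp j) / U (grp j) * (1 + v j) with hβ
  have hβ0 : ∀ j, 0 ≤ β j := fun j =>
    mul_nonneg (div_nonneg (ha _).1 (hUpos _).le) (hvpos j).le
  have hβ1 : ∀ j, β j < 1 + v j := by
    intro j
    have : a (grp j) / U (grp j) < 1 := (div_lt_one (hUpos _)).2 (hUa _)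
    simp only [hβ]
    nlinarith [hvpos j]
  have hsum : ∀ k, ∑ j ∈ Finset.univ.filter (fun i => grp i = k), β j = a k := by
    intro k
    have : ∑ j ∈ Finset.univ.filter (fun i => grp i = k), β j
        = ∑ j ∈ Finset.univ.filter (fun i => grp i = k), a k / U k * (1 + v j) := by
      refine Finset.sum_congr rfl fun j hj => ?_
      have : grp j = k := by simpa using hj
      simp only [hβ, this]
    rw [this, ← Finset.mul_sum]
    exact div_mul_cancel₀ _ (hUpos k).ne'
  refine lt_of_le_of_lt ?_ (prod_integral' (fun j => v j - β j)
    (fun j => by have := hβ1 j; linarith) r hr)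
  refine setLIntegral_mono' (MeasurableSet.univ_pi fun _ => measurableSet_Ioo) ?_
  intro t ht
  have htp : ∀ j, 0 < t j := fun j => (ht j (Set.mem_univ j)).1
  apply ENNReal.ofReal_le_ofReal
  have h1 : t i ^ s = ∏ j, t j ^ v j := by
    rw [Finset.prod_eq_single i]
    · simp [hv]
    · intro j _ hj; simp [hv, hj]
    · simp
  calc t i ^ s * kernelWeight grp a t
      ≤ t i ^ s * ∏ j, t j ^ (-(β j)) :=
        mul_le_mul_of_nonneg_left (weight_le' grp a β hβ0 hsum hgrp t htp)
          (Real.rpow_nonneg (htp i).le _)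
    _ = ∏ j, t j ^ (v j - β j) := by
        rw [h1, ← Finset.prod_mul_distrib]
        refine Finset.prod_congr rfl fun j _ => ?_
        rw [← Real.rpow_add (htp j), sub_eq_add_neg]

lemma series' (a₀ s B : ℝ) (d : ℕ) (h : 0 < a₀ + s) :
    Summable fun j : ℕ => ((1/2:ℝ) ^ (j + 3)) ^ s *
      (B * ((1/2:ℝ) ^ (j + 2)) ^ a₀ * |Real.log ((1/2:ℝ) ^ (j + 2))| ^ d) := by
  have hq : ‖((1/2:ℝ) ^ (a₀ + s))‖ < 1 := by
    rw [Real.norm_of_nonneg (by positivity)]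
    exact Real.rpow_lt_one (by norm_num) (by norm_num) h
  have h1 := summable_pow_mul_geometric_of_norm_lt_one d hq
  have h2 := ((summable_nat_add_iff 2).2 h1).mul_left ((1/2:ℝ)^s * B * Real.log 2 ^ d)
  refine h2.congr fun j => ?_
  have e1 : |Real.log ((1/2:ℝ) ^ (j + 2))| = ((j + 2 : ℕ) : ℝ) * Real.log 2 := by
    rw [Real.log_pow, one_div, Real.log_inv, mul_neg, abs_neg, abs_of_nonneg]
    exact mul_nonneg (Nat.cast_nonneg _) (Real.log_nonneg (by norm_num))
  have e2 : ((1/2:ℝ) ^ (j + 3)) ^ s = (1/2:ℝ) ^ s * ((1/2:ℝ) ^ s) ^ (j + 2) := by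
    rw [← pow_succ', ← Real.rpow_natCast, ← Real.rpow_natCast, ← Real.rpow_mul (by norm_num),
      ← Real.rpow_mul (by norm_num), mul_comm]
  have e3 : ((1/2:ℝ) ^ (j + 2)) ^ a₀ = ((1/2:ℝ) ^ a₀) ^ (j + 2) := by
    rw [← Real.rpow_natCast, ← Real.rpow_natCast, ← Real.rpow_mul (by norm_num),
      ← Real.rpow_mul (by norm_num), mul_comm]
  rw [e1, e2, e3, Real.rpow_add (by norm_num), mul_pow, mul_pow]
  ring

lemma part_two' (grp : Fin n → Fin m) (a : Fin m → ℝ) (c : (Fin n → ℕ) → ℝ)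
    (s a₀ B r : ℝ) (d : ℕ) (hs : s < 0) (has : 0 < a₀ + s) (hB : 0 < B)
    (hw : ∫⁻ t in posCube n r, ENNReal.ofReal (kernelWeight grp a t) < ⊤)
    (hsub : ∀ ε : ℝ, 0 < ε → ε < 1/2 →
        fracMeasure grp a {t | (∀ i, t i ∈ Set.Ioo 0 r) ∧ starFn c t < ε} <
          ENNReal.ofReal (B * ε ^ a₀ * |Real.log ε| ^ d)) :
    ∫⁻ t in posCube n r, ENNReal.ofReal (starFn c t ^ s * kernelWeight grp a t) < ⊤ := by
  have hwm : Measurable fun t => ENNReal.ofReal (kernelWeight grp a t) :=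
    (kernelWeight_measurable' grp a).ennreal_ofReal
  set E : ℕ → Set (Fin n → ℝ) := fun j =>
    {t | t ∈ posCube n r ∧ (1/2:ℝ)^(j+3) ≤ starFn c t ∧ starFn c t < (1/2:ℝ)^(j+2)} with hE
  set G : Set (Fin n → ℝ) := {t | t ∈ posCube n r ∧ (starFn c t = 0 ∨ 1/4 ≤ starFn c t)} with hG
  have hcov : posCube n r ⊆ G ∪ ⋃ j, E j := by
    intro t ht
    by_cases h : starFn c t = 0 ∨ 1/4 ≤ starFn c t
    · exact Or.inl ⟨ht, h⟩
    · right
      push Not at h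
      have hpos : 0 < starFn c t := lt_of_le_of_ne (starFn_nonneg' c t) (Ne.symm h.1)
      have hex : ∃ k : ℕ, (1/2:ℝ)^(k+3) ≤ starFn c t := by
        obtain ⟨k, hk⟩ := exists_pow_lt_of_lt_one hpos (by norm_num : (1/2:ℝ) < 1)
        exact ⟨k, (pow_le_pow_of_le_one (by norm_num) (by norm_num) (by omega)).trans hk.le⟩
      classical
      refine Set.mem_iUnion.2 ⟨Nat.find hex, ht, Nat.find_spec hex, ?_⟩
      rcases Nat.eq_zero_or_pos (Nat.find hex) with h0 | h0
      · rw [h0]; norm_num; linarith [h.2]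
      · have := Nat.find_min hex (m := Nat.find hex - 1) (by omega)
        rw [not_le] at this
        have e : Nat.find hex - 1 + 3 = Nat.find hex + 2 := by omega
        rwa [e] at this
  have hGint : ∫⁻ t in G, ENNReal.ofReal (starFn c t ^ s * kernelWeight grp a t) < ⊤ := by
    have : ∫⁻ t in G, ENNReal.ofReal (starFn c t ^ s * kernelWeight grp a t)
        ≤ ∫⁻ t in G, ENNReal.ofReal ((1/4:ℝ)^s) * ENNReal.ofReal (kernelWeight grp a t) := by
      refine setLIntegral_mono (hwm.const_mul _) ?_
      rintro t ⟨_, ht⟩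
      rw [← ENNReal.ofReal_mul (by positivity)]
      apply ENNReal.ofReal_le_ofReal
      refine mul_le_mul_of_nonneg_right ?_ (kernelWeight_nonneg' _ _ _)
      rcases ht with h | h
      · rw [h, Real.zero_rpow hs.ne]; positivity
      · exact Real.rpow_le_rpow_of_nonpos (by norm_num) h hs.le
    refine this.trans_lt ?_
    rw [lintegral_const_mul _ hwm]
    refine ENNReal.mul_lt_top ENNReal.ofReal_lt_top (lt_of_le_of_lt ?_ hw)
    exact lintegral_mono_set fun t ht => ht.1
  have hEint : ∀ j, ∫⁻ t in E j, ENNReal.ofReal (starFn c t ^ s * kernelWeight grp a t)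
      ≤ ENNReal.ofReal (((1/2:ℝ) ^ (j + 3)) ^ s *
      (B * ((1/2:ℝ) ^ (j + 2)) ^ a₀ * |Real.log ((1/2:ℝ) ^ (j + 2))| ^ d)) := by
    intro j
    calc ∫⁻ t in E j, ENNReal.ofReal (starFn c t ^ s * kernelWeight grp a t)
        ≤ ∫⁻ t in E j, ENNReal.ofReal (((1/2:ℝ) ^ (j + 3)) ^ s)
            * ENNReal.ofReal (kernelWeight grp a t) := by
          refine setLIntegral_mono (hwm.const_mul _) ?_
          rintro t ⟨_, ht, _⟩
          rw [← ENNReal.ofReal_mul (by positivity)]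
          apply ENNReal.ofReal_le_ofReal
          refine mul_le_mul_of_nonneg_right ?_ (kernelWeight_nonneg' _ _ _)
          exact Real.rpow_le_rpow_of_nonpos (by positivity) ht hs.le
      _ = ENNReal.ofReal (((1/2:ℝ) ^ (j + 3)) ^ s)
            * ∫⁻ t in E j, ENNReal.ofReal (kernelWeight grp a t) := lintegral_const_mul _ hwm
      _ ≤ ENNReal.ofReal (((1/2:ℝ) ^ (j + 3)) ^ s) * ENNReal.ofReal
            (B * ((1/2:ℝ) ^ (j + 2)) ^ a₀ * |Real.log ((1/2:ℝ) ^ (j + 2))| ^ d) := by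
          gcongr
          refine (withDensity_apply_le _ _).trans (le_trans (measure_mono ?_)
            (hsub ((1/2:ℝ)^(j+2)) (by positivity) ?_).le)
          · rintro t ⟨ht, _, h⟩
            exact ⟨fun i => ht i (Set.mem_univ i), h⟩
          · calc (1/2:ℝ)^(j+2) ≤ (1/2:ℝ)^2 :=
                pow_le_pow_of_le_one (by norm_num) (by norm_num) (by omega)
              _ < 1/2 := by norm_num
      _ = _ := by rw [← ENNReal.ofReal_mul (by positivity)]
  calc ∫⁻ t in posCube n r, ENNReal.ofReal (starFn c t ^ s * kernelWeight grp a t)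
      ≤ ∫⁻ t in G ∪ ⋃ j, E j, ENNReal.ofReal (starFn c t ^ s * kernelWeight grp a t) :=
        lintegral_mono_set hcov
    _ ≤ (∫⁻ t in G, ENNReal.ofReal (starFn c t ^ s * kernelWeight grp a t))
        + ∫⁻ t in ⋃ j, E j, ENNReal.ofReal (starFn c t ^ s * kernelWeight grp a t) :=
        lintegral_union_le _ _ _
    _ ≤ (∫⁻ t in G, ENNReal.ofReal (starFn c t ^ s * kernelWeight grp a t))
        + ∑' j, ∫⁻ t in E j, ENNReal.ofReal (starFn c t ^ s * kernelWeight grp a t) := by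
        gcongr
        exact lintegral_iUnion_le _ _
    _ < ⊤ := by
        refine ENNReal.add_lt_top.2 ⟨hGint, ?_⟩
        refine (ENNReal.tsum_le_tsum hEint).trans_lt ?_
        exact (series' a₀ s B d has).tsum_ofReal_lt_top

/-- The coordinatewise reflection. -/
def reflEquiv (σ : Fin n → Bool) : (Fin n → ℝ) ≃ᵐ (Fin n → ℝ) :=
  MeasurableEquiv.piCongrRight fun i => if σ i then MeasurableEquiv.neg ℝ else MeasurableEquiv.refl ℝ

lemma reflEquiv_apply' (σ : Fin n → Bool) (t : Fin n → ℝ) (i : Fin n) :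
    reflEquiv σ t i = if σ i then - t i else t i := by
  unfold reflEquiv
  by_cases h : σ i <;> simp [MeasurableEquiv.piCongrRight, h]

lemma reflEquiv_mp' (σ : Fin n → Bool) :
    MeasurePreserving (reflEquiv σ) (volume : Measure (Fin n → ℝ)) volume := by
  have h := volume_preserving_pi (ι := Fin n) (α' := fun _ => ℝ) (β' := fun _ => ℝ)
    (f := fun i x => if σ i then -x else x) (fun i => by
      by_cases h : σ i
      · simpa [h] using Measure.measurePreserving_neg (volume : Measure ℝ)
      · simp only [h]
        exact MeasurePreserving.id (volume : Measure ℝ))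
  have e : (reflEquiv σ : (Fin n → ℝ) → (Fin n → ℝ))
      = fun t i => if σ i then - t i else t i := by
    funext t i
    exact reflEquiv_apply' σ t i
  rw [e]
  exact h

lemma reflect' (f : (Fin n → ℝ) → ℝ≥0∞) (hf : ∀ s t : Fin n → ℝ, (∀ i, |s i| = |t i|) → f s = f t)
    (r : ℝ) (h : ∫⁻ t in posCube n r, f t < ⊤) :
    ∫⁻ t in Set.univ.pi (fun _ : Fin n => Set.Ioo (-r) r), f t < ⊤ := by
  set Z : Set (Fin n → ℝ) := ⋃ i, {t | t i = 0} with hZ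
  have hZ0 : volume Z = 0 := by
    rw [hZ, measure_iUnion_null_iff]
    intro i
    exact Measure.pi_hyperplane (fun _ : Fin n => (volume : Measure ℝ)) i 0
  have hcov : Set.univ.pi (fun _ : Fin n => Set.Ioo (-r) r)
      ⊆ Z ∪ ⋃ σ : Fin n → Bool, reflEquiv σ ⁻¹' posCube n r := by
    intro t ht
    by_cases hz : t ∈ Z
    · exact Or.inl hz
    right
    have hne : ∀ i, t i ≠ 0 := fun i hi => hz (Set.mem_iUnion.2 ⟨i, hi⟩)
    classical
    refine Set.mem_iUnion.2 ⟨fun i => decide (t i < 0), ?_⟩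
    intro i _
    have h1 := ht i (Set.mem_univ i)
    rw [reflEquiv_apply']
    by_cases hi : t i < 0
    · simp only [hi, decide_true, if_true]
      exact ⟨by linarith, by linarith [h1.1]⟩
    · simp only [hi, decide_false]
      exact ⟨lt_of_le_of_ne (not_lt.1 hi) (hne i).symm, h1.2⟩
  refine (lintegral_mono_set hcov).trans_lt ?_
  refine (lintegral_union_le _ _ _).trans_lt ?_
  rw [setLIntegral_measure_zero _ _ hZ0, zero_add]
  refine (lintegral_iUnion_le _ _).trans_lt ?_
  rw [tsum_fintype]
  refine ENNReal.sum_lt_top.2 fun σ _ => ?_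
  have h1 := (reflEquiv_mp' σ).setLIntegral_comp_preimage_emb
    (reflEquiv σ).measurableEmbedding f (posCube n r)
  have h2 : (fun t => f (reflEquiv σ t)) = f := by
    funext t
    apply hf
    intro i
    rw [reflEquiv_apply']
    split_ifs <;> simp
  rw [h2] at h1
  rwa [h1]

lemma final' (grp : Fin n → Fin m) (hn : 0 < n) (a : Fin m → ℝ) (c : (Fin n → ℕ) → ℝ)
    (s r : ℝ)
    (h1 : ∀ i, ∫⁻ t in posCube n r, ENNReal.ofReal (t i ^ s * kernelWeight grp a t) < ⊤)
    (h2 : ∫⁻ t in posCube n r, ENNReal.ofReal (starFn c t ^ s * kernelWeight grp a t) < ⊤) :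
    ∫⁻ t in posCube n r, ENNReal.ofReal (minFactor c t ^ s * kernelWeight grp a t) < ⊤ := by
  have hm : Measurable fun t : Fin n → ℝ =>
      ∑ i, ENNReal.ofReal (t i ^ s * kernelWeight grp a t) := by
    have := kernelWeight_measurable' grp a
    fun_prop
  have hle : ∫⁻ t in posCube n r, ENNReal.ofReal (minFactor c t ^ s * kernelWeight grp a t)
      ≤ ∫⁻ t in posCube n r, (∑ i, ENNReal.ofReal (t i ^ s * kernelWeight grp a t)
        + ENNReal.ofReal (starFn c t ^ s * kernelWeight grp a t)) := by
    refine setLIntegral_mono' (MeasurableSet.univ_pi fun _ => measurableSet_Ioo) ?_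
    intro t ht
    have htp : ∀ j, 0 < t j := fun j => (ht j (Set.mem_univ j)).1
    unfold minFactor
    rcases min_choice (⨅ i, |t i|) (starFn c t) with h | h
    · haveI : Nonempty (Fin n) := ⟨⟨0, hn⟩⟩
      obtain ⟨i, hi⟩ := exists_eq_ciInf_of_finite (f := fun i => |t i|)
      rw [h, ← hi, abs_of_pos (htp i)]
      exact le_add_right (Finset.single_le_sum
        (f := fun i => ENNReal.ofReal (t i ^ s * kernelWeight grp a t))
        (fun _ _ => zero_le) (Finset.mem_univ i))
    · rw [h]; exact le_add_self
  refine hle.trans_lt ?_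
  rw [lintegral_add_left hm, lintegral_finsetSum]
  · exact ENNReal.add_lt_top.2 ⟨ENNReal.sum_lt_top.2 fun i _ => h1 i, h2⟩
  · intro i _
    have := kernelWeight_measurable' grp a
    fun_prop

/-- The estimate (3.3)-(3.7): if `s₀ < 0` and `s₀ > max(-g, -1/max(o(S),2))` then for
sufficiently small `r₀ > 0` the integral
`∫_{(-r₀,r₀)^n} (min(|t₁|,...,|tₙ|, S^*(t)))^{s₀} ∏_k |t_k|^{-α_k} dt` is finite. -/
theorem integral_finite
    (n m : ℕ) (hn : 0 < n) (hm : 0 < m)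
    (grp : Fin n → Fin m) (hgrp : Function.Surjective grp)
    (l : Fin m → ℕ) (hl : ∀ k, l k = (Finset.univ.filter (fun i => grp i = k)).card)
    (a : Fin m → ℝ) (ha : ∀ k, 0 ≤ a k ∧ a k < l k)
    (S : (Fin n → ℝ) → ℝ) (c : (Fin n → ℕ) → ℝ)
    (hSc : HasTaylorSeriesAtOrigin S c) (hc : c ≠ 0)
    (hS0 : S 0 = 0) (hS1 : fderiv ℝ S 0 = 0)
    (a₀ : ℝ) (d₀ : ℕ) (ha₀ : IsSublevelExponent grp a c a₀ d₀)
    (oS : ℕ) (hoS : newtonOrder c = (oS : ℕ∞))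
    (g : ℝ) (hg : g = min a₀ (⨅ k, ((l k : ℝ) - a k)))
    (s₀ : ℝ) (hs₀neg : s₀ < 0) (hs₀ : max (-g) (-(1 / max (oS : ℝ) 2)) < s₀) :
    ∃ r₁ > (0 : ℝ), ∀ r₀ : ℝ, 0 < r₀ → r₀ ≤ r₁ →
      ∫⁻ t in Set.univ.pi (fun _ : Fin n => Set.Ioo (-r₀) r₀),
        ENNReal.ofReal (minFactor c t ^ s₀ * kernelWeight grp a t) < ⊤ := by
  obtain ⟨ha0, -, R, hR, hsub⟩ := ha₀
  have hsg : -g < s₀ := (le_max_left _ _).trans_lt hs₀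
  have hs1 : -1 < s₀ := by
    have h1 : -(1 / max (oS : ℝ) 2) < s₀ := (le_max_right _ _).trans_lt hs₀
    have h2 : 1 / max (oS : ℝ) 2 ≤ 1 / 2 :=
      one_div_le_one_div_of_le (by norm_num) (le_max_right _ _)
    linarith
  have hga : g ≤ a₀ := hg ▸ min_le_left _ _
  have hgk : ∀ k, g ≤ (l k : ℝ) - a k := fun k => by
    rw [hg]
    exact (min_le_right _ _).trans (ciInf_le (Set.finite_range _).bddBelow k)
  refine ⟨min 1 (R / 2), by positivity, ?_⟩
  intro r hr hr1
  have hrle1 : r ≤ 1 := hr1.trans (min_le_left _ _)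
  have hrR : r < R := by
    have := hr1.trans (min_le_right _ _)
    linarith
  obtain ⟨b, B, -, hB, hbB⟩ := hsub r hr hrR
  have h1 : ∀ i, ∫⁻ t in posCube n r,
      ENNReal.ofReal (t i ^ s₀ * kernelWeight grp a t) < ⊤ := fun i =>
    part_one' grp hgrp a (fun k => by rw [← hl k]; exact ha k) s₀ hs1 hs₀neg
      (fun k => by rw [← hl k]; linarith [hgk k]) i r hr
  have hw : ∫⁻ t in posCube n r, ENNReal.ofReal (kernelWeight grp a t) < ⊤ := by
    refine lt_of_le_of_lt ?_ (h1 ⟨0, hn⟩)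
    refine setLIntegral_mono' (MeasurableSet.univ_pi fun _ => measurableSet_Ioo) ?_
    intro t ht
    apply ENNReal.ofReal_le_ofReal
    have h := ht ⟨0, hn⟩ (Set.mem_univ _)
    refine le_mul_of_one_le_left (kernelWeight_nonneg' _ _ _) ?_
    exact Real.one_le_rpow_of_pos_of_le_one_of_nonpos h.1 (h.2.le.trans hrle1) hs₀neg.le
  refine reflect' _ ?_ r (final' grp hn a c s₀ r h1 (part_two' grp a c s₀ a₀ B r d₀ hs₀neg
    (by linarith) hB hw fun ε h h' => (hbB ε h h').2))
  intro s t hst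
  have e1 : minFactor c s = minFactor c t := by
    simp only [minFactor, starFn, hst]
  have e2 : kernelWeight grp a s = kernelWeight grp a t := by
    have : ∀ i, s i ^ 2 = t i ^ 2 := fun i => (sq_eq_sq_iff_abs_eq_abs _ _).2 (hst i)
    simp only [kernelWeight, grpNorm, this]
  rw [e1, e2]

end Paper
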